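/- Let G be a finite simple graph, d ≥ 1 an integer with ξ(G) ≤ d (where ξ is the orthogonal rank), and suppose G contains M pairwise disjoint cliques of size d. Then Δ_{Md} ≤ Ḡ ⊗ Q_d, i.e. there is a cohomomorphism from the diagonal noncommutative graph Δ_{Md} to Ḡ ⊗ Q_d. -/

import Mathlib

open scoped Kronecker
open Matrix

namespace NCG

/-- Existence of a cohomomorphism from `T` to `S` (written `T ≤ S`). -/
def Cohom {A B : Type} [Fintype A] [DecidableEq A] [Fintype B] [DecidableEq B]
    (T : Submodule ℂ (Matrix B B ℂ)) (S : Submodule ℂ (Matrix A A ℂ)) : Prop :=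
  ∃ (k : ℕ) (E : Fin k → Matrix A B ℂ),
    (∑ i, (E i)ᴴ * E i) = 1 ∧ ∀ i j : Fin k, ∀ M ∈ S, (E i)ᴴ * M * E j ∈ T

/-- The noncommutative graph `Ḡ` of a classical graph `G`. -/
noncomputable def graphNC {V : Type} [Fintype V] [DecidableEq V] (G : SimpleGraph V) :
    Submodule ℂ (Matrix V V ℂ) :=
  Submodule.span ℂ {M | ∃ x y : V, (G.Adj x y ∨ x = y) ∧ M = Matrix.single x y 1}

/-- The confusability graph `Q_d = ℂ·I_d` of the noiseless `d`-dimensional quantum channel. -/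
noncomputable def qGraph (d : ℕ) : Submodule ℂ (Matrix (Fin d) (Fin d) ℂ) :=
  Submodule.span ℂ {(1 : Matrix (Fin d) (Fin d) ℂ)}

/-- Tensor product of noncommutative graphs. -/
noncomputable def ncTensor {A B : Type} [Fintype A] [DecidableEq A] [Fintype B] [DecidableEq B]
    (S : Submodule ℂ (Matrix A A ℂ)) (T : Submodule ℂ (Matrix B B ℂ)) :
    Submodule ℂ (Matrix (A × B) (A × B) ℂ) :=
  Submodule.span ℂ {M | ∃ X ∈ S, ∃ Y ∈ T, M = X ⊗ₖ Y}

/-- Direct sum of a finite family of noncommutative graphs. -/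
noncomputable def ncDirectSum {ι : Type} [Fintype ι] [DecidableEq ι] {V : ι → Type}
    [∀ i, Fintype (V i)] [∀ i, DecidableEq (V i)]
    (S : ∀ i, Submodule ℂ (Matrix (V i) (V i) ℂ)) :
    Submodule ℂ (Matrix (Σ i, V i) (Σ i, V i) ℂ) where
  carrier := {M | (∀ p q : Σ i, V i, p.1 ≠ q.1 → M p q = 0) ∧
    ∀ i, (Matrix.of fun x y : V i => M ⟨i, x⟩ ⟨i, y⟩) ∈ S i}
  add_mem' := by
    rintro a b ⟨ha1, ha2⟩ ⟨hb1, hb2⟩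
    refine ⟨fun p q h => ?_, fun i => ?_⟩
    · simp [Matrix.add_apply, ha1 p q h, hb1 p q h]
    · have h := (S i).add_mem (ha2 i) (hb2 i)
      exact h
  zero_mem' := by
    refine ⟨fun p q h => rfl, fun i => ?_⟩
    have h0 : (Matrix.of fun x y : V i =>
        (0 : Matrix (Σ j, V j) (Σ j, V j) ℂ) ⟨i, x⟩ ⟨i, y⟩) = 0 := rfl
    rw [h0]
    exact (S i).zero_mem
  smul_mem' := by
    rintro c a ⟨ha1, ha2⟩
    refine ⟨fun p q h => ?_, fun i => ?_⟩
    · simp [Matrix.smul_apply, ha1 p q h]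
    · have h := (S i).smul_mem c (ha2 i)
      exact h

/-- `⊕_{d=1}^r Ḡ_d ⊗ Q_d`, where `G d` plays the role of `G_{d+1}` for `d : Fin r`. -/
noncomputable def bigSum {r : ℕ} {V : Fin r → Type} [∀ d, Fintype (V d)] [∀ d, DecidableEq (V d)]
    (G : ∀ d, SimpleGraph (V d)) :
    Submodule ℂ (Matrix (Σ d : Fin r, V d × Fin (d.1 + 1))
      (Σ d : Fin r, V d × Fin (d.1 + 1)) ℂ) :=
  ncDirectSum fun d : Fin r => ncTensor (graphNC (G d)) (qGraph (d.1 + 1))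


/-- `Δ_m`: the diagonal noncommutative graph (confusability graph of the noiseless
classical channel with `m` inputs). -/
noncomputable def diagNC (m : ℕ) : Submodule ℂ (Matrix (Fin m) (Fin m) ℂ) :=
  Submodule.span ℂ {M | ∃ i : Fin m, M = Matrix.single i i 1}

/-!
Let `u` be an orthogonal representation of `G` by unit vectors in `ℂ^d`. Conjugating `A ⊗ I_d` by
the map `|g⟩ ↦ |g⟩ ⊗ |u_g⟩` gives the Hadamard product of `A` with the Gram matrix of `u`. For
`A ∈ Ḡ` this product is diagonal, since the Gram matrix vanishes on the edges of `G` and `A` off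
them; for `A = I` it is `I`, so the map is an isometry. Hence all vertices of `G` can be sent as
distinct messages, and `M` disjoint sets of size `d` supply `M * d` vertices.
-/

section Encoding

variable {V K R : Type*} [Fintype K] [CommSemiring R] [StarRing R]

/-- The Gram matrix of a family of coordinate vectors, conjugate-linear in the row index. It is
`Matrix.gram` without the passage to `EuclideanSpace`, so that its entries are literally the
products by which orthogonal representations are specified. -/
def gramMatrix (u : V → K → R) : Matrix V V R :=
  of fun g g' => star (u g) ⬝ᵥ u g'

variable [DecidableEq V]

/-- The matrix of the map `|g⟩ ↦ |g⟩ ⊗ |u_g⟩`, the Kraus operator which turns an orthogonal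
representation `u` into a cohomomorphism. -/
def vertexEncoding (u : V → K → R) : Matrix (V × K) V R :=
  of fun p g => if p.1 = g then u g p.2 else 0

theorem conjTranspose_vertexEncoding_mul_kronecker_one_mul [Fintype V] [DecidableEq K]
    (u : V → K → R) (A : Matrix V V R) :
    (vertexEncoding u)ᴴ * (A ⊗ₖ (1 : Matrix K K R)) * vertexEncoding u = A ⊙ gramMatrix u := by
  ext g g'
  simp only [vertexEncoding, gramMatrix, mul_apply, conjTranspose_apply, kronecker_apply, of_apply,
    hadamard_apply, one_apply, dotProduct, Pi.star_apply, Fintype.sum_prod_type,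
    apply_ite (star : R → R), star_zero, ite_mul, mul_ite, zero_mul, mul_zero, mul_one,
    Finset.sum_ite_irrel, Finset.sum_const_zero, Finset.sum_ite_eq',
    Finset.mem_univ, if_true, Finset.mul_sum]
  exact Finset.sum_congr rfl fun k _ => by ring

end Encoding

section NoncommutativeGraphs

theorem mem_diagNC_of_isDiag {m : ℕ} {X : Matrix (Fin m) (Fin m) ℂ} (hX : X.IsDiag) :
    X ∈ diagNC m := by
  have hsum : X = ∑ i, X i i • single i i (1 : ℂ) := by
    simp only [smul_single, smul_eq_mul, mul_one]
    exact hX.diagonal_diag.symm.trans (sum_single_eq_diagonal X.diag).symm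
  rw [hsum]
  exact Submodule.sum_mem _ fun i _ => Submodule.smul_mem _ _ (Submodule.subset_span ⟨i, rfl⟩)

variable {A B : Type} [Fintype A] [DecidableEq A] [Fintype B] [DecidableEq B]

theorem ncTensor_eq_map₂ (S : Submodule ℂ (Matrix A A ℂ)) (T : Submodule ℂ (Matrix B B ℂ)) :
    ncTensor S T = Submodule.map₂ (kroneckerBilinear (R := ℂ)) S T := by
  rw [Submodule.map₂_eq_span_image2]
  refine congrArg (Submodule.span ℂ) (Set.ext fun N => ?_)
  exact ⟨fun ⟨X, hX, Y, hY, hN⟩ => ⟨X, hX, Y, hY, hN.symm⟩,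
    fun ⟨X, hX, Y, hY, hN⟩ => ⟨X, hX, Y, hY, hN.symm⟩⟩

theorem mem_ncTensor_qGraph {d : ℕ} {S : Submodule ℂ (Matrix A A ℂ)}
    {N : Matrix (A × Fin d) (A × Fin d) ℂ} :
    N ∈ ncTensor S (qGraph d) ↔ ∃ X ∈ S, X ⊗ₖ (1 : Matrix (Fin d) (Fin d) ℂ) = N := by
  rw [ncTensor_eq_map₂, qGraph, Submodule.map₂_span_singleton_eq_map_flip]
  rfl

theorem Cohom.of_isometry {T : Submodule ℂ (Matrix B B ℂ)} {S : Submodule ℂ (Matrix A A ℂ)}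
    (E : Matrix A B ℂ) (hE : Eᴴ * E = 1) (hST : ∀ N ∈ S, Eᴴ * N * E ∈ T) : Cohom T S :=
  ⟨1, fun _ => E, by rwa [Fin.sum_univ_one], fun _ _ => hST⟩

end NoncommutativeGraphs

section OrthogonalRepresentations

variable {V : Type} {G : SimpleGraph V} {K : Type*} [Fintype K] {u : V → K → ℂ}

/-- An orthogonal representation of `G` by unit vectors in `ℂ^K`. The orthogonal rank `ξ(G)` is the
least cardinality of such a `K`; adjacent (not non-adjacent) vertices are orthogonal. -/
structure IsOrthogonalRepresentation (G : SimpleGraph V) (u : V → K → ℂ) : Prop where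
  unit : ∀ g, star (u g) ⬝ᵥ u g = 1
  orthogonal : ∀ g g', G.Adj g g' → star (u g) ⬝ᵥ u g' = 0

variable [DecidableEq V]

theorem IsOrthogonalRepresentation.one_hadamard_gramMatrix (hu : IsOrthogonalRepresentation G u) :
    1 ⊙ gramMatrix u = 1 :=
  one_hadamard_eq_one_iff.mpr (funext hu.unit)

variable [Fintype V]

theorem apply_eq_zero_of_mem_graphNC {A : Matrix V V ℂ} (hA : A ∈ graphNC G) {x y : V}
    (hne : x ≠ y) (hadj : ¬G.Adj x y) : A x y = 0 := by
  induction hA using Submodule.span_induction with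
  | mem B hB =>
    obtain ⟨a, b, hab, rfl⟩ := hB
    refine single_apply_of_ne _ _ _ _ _ ?_
    rintro ⟨rfl, rfl⟩
    exact hab.elim hadj hne
  | zero => rfl
  | add B B' _ _ hB hB' => rw [Matrix.add_apply, hB, hB', add_zero]
  | smul c B _ hB => rw [Matrix.smul_apply, hB, smul_zero]

theorem IsOrthogonalRepresentation.isDiag_hadamard_gramMatrix
    (hu : IsOrthogonalRepresentation G u) {A : Matrix V V ℂ} (hA : A ∈ graphNC G) :
    (A ⊙ gramMatrix u).IsDiag := fun g g' hne => by
  by_cases hadj : G.Adj g g'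
  · exact mul_eq_zero_of_right _ (hu.orthogonal g g' hadj)
  · exact mul_eq_zero_of_left (apply_eq_zero_of_mem_graphNC hA hne hadj) _

theorem IsOrthogonalRepresentation.cohom_diagNC {d m : ℕ} {u : V → Fin d → ℂ}
    (hu : IsOrthogonalRepresentation G u) {f : Fin m → V} (hf : Function.Injective f) :
    Cohom (diagNC m) (ncTensor (graphNC G) (qGraph d)) := by
  set E := (vertexEncoding u).submatrix id f
  have hE (A : Matrix V V ℂ) :
      Eᴴ * (A ⊗ₖ (1 : Matrix (Fin d) (Fin d) ℂ)) * E = (A ⊙ gramMatrix u).submatrix f f := by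
    rw [← conjTranspose_vertexEncoding_mul_kronecker_one_mul]
    rfl
  refine Cohom.of_isometry E ?_ fun N hN => ?_
  · calc Eᴴ * E = Eᴴ * (1 ⊗ₖ 1) * E := by rw [one_kronecker_one, Matrix.mul_one]
      _ = (1 ⊙ gramMatrix u).submatrix f f := hE 1
      _ = 1 := by rw [hu.one_hadamard_gramMatrix, submatrix_one f hf]
  · obtain ⟨A, hA, rfl⟩ := mem_ncTensor_qGraph.mp hN
    rw [hE]
    exact mem_diagNC_of_isDiag ((hu.isDiag_hadamard_gramMatrix hA).submatrix hf)

end OrthogonalRepresentations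

theorem card_mul_le_card_of_pairwise_disjoint {ι V : Type*} [Fintype ι] [Fintype V]
    {C : ι → Finset V} {d : ℕ} (hcard : ∀ i, d ≤ (C i).card)
    (hdisj : ∀ i j, i ≠ j → Disjoint (C i) (C j)) : Fintype.card ι * d ≤ Fintype.card V := by
  classical
  calc Fintype.card ι * d = ∑ _i : ι, d := by
        rw [Finset.sum_const, Finset.card_univ, smul_eq_mul]
    _ ≤ ∑ i, (C i).card := Finset.sum_le_sum fun i _ => hcard i
    _ = (Finset.univ.biUnion C).card :=
        (Finset.card_biUnion fun i _ j _ hij => hdisj i j hij).symm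
    _ ≤ Fintype.card V := Finset.card_le_univ _

theorem disjoint_cliques_cohom_general {V : Type} [Fintype V] [DecidableEq V] {G : SimpleGraph V}
    {d : ℕ} (hxi : ∃ u : V → Fin d → ℂ, IsOrthogonalRepresentation G u)
    {m : ℕ} (hm : m ≤ Fintype.card V) :
    Cohom (diagNC m) (ncTensor (graphNC G) (qGraph d)) := by
  obtain ⟨u, hu⟩ := hxi
  obtain ⟨f⟩ : Nonempty (Fin m ↪ V) :=
    Function.Embedding.nonempty_of_card_le ((Fintype.card_fin m).trans_le hm)
  exact hu.cohom_diagNC f.injective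

theorem disjoint_cliques_cohom
    {V : Type} [Fintype V] [DecidableEq V] (G : SimpleGraph V)
    (d : ℕ) (hd : 1 ≤ d)
    (hxi : ∃ u : V → Fin d → ℂ, (∀ g, star (u g) ⬝ᵥ u g = 1) ∧
      ∀ g g', G.Adj g g' → star (u g) ⬝ᵥ u g' = 0)
    (M : ℕ) (C : Fin M → Finset V)
    (hclique : ∀ i, G.IsClique (C i : Set V))
    (hcard : ∀ i, (C i).card = d)
    (hdisj : ∀ i j, i ≠ j → Disjoint (C i) (C j)) :
    Cohom (diagNC (M * d)) (ncTensor (graphNC G) (qGraph d)) := by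
  obtain ⟨u, hunit, horth⟩ := hxi
  have hMd : M * d ≤ Fintype.card V := by
    simpa only [Fintype.card_fin] using
      card_mul_le_card_of_pairwise_disjoint (fun i => (hcard i).ge) hdisj
  exact disjoint_cliques_cohom_general ⟨u, hunit, horth⟩ hMd


end NCG
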